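/- Suppose 𝒦 has nonempty interior and let β be a point of the interior of 𝒦 with f(β) ≠ 0. Let γ : [0,∞) → ℂ be a continuous map with γ(1) = β and f(γ(t)) = t·f(β) for all t ≥ 0. Then there exists a unique real number c > 1 such that γ(c) lies on the topological boundary of 𝒦; moreover, γ(t) belongs to the interior of 𝒦 for every t with 0 < t < c, and γ(t) ∉ 𝒦 for every t > c. -/

import Mathlib

open Polynomial Complex Set

/-!
If `γ t₀` is not interior to `K`, let `w ↦ re (u * w)` be a supporting functional of `K` at `γ t₀`.
At any point at least as high as `γ t₀`, the logarithmic derivative `f' / f = ∑ 1 / (w - αⱼ)` has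
`re (f' / f / u) > 0`, as in the proof of the Gauss–Lucas theorem. Since `f (γ t) = t • b` makes the
velocity of `γ` equal to `t⁻¹ • (f / f') (γ t)`, the curve climbs whenever it is at least as high
as `γ t₀`, so it never meets `K` again. As `|f (γ t)| → ∞`, the curve does leave `K`, hence crosses
the frontier, and only once.
-/

section FrontierCrossing

lemma inter_frontier_nonempty_of_isPreconnected {X : Type*} [TopologicalSpace X] {S K : Set X}
    (hS : IsPreconnected S) (hint : (S ∩ interior K).Nonempty)
    (hout : (S ∩ (closure K)ᶜ).Nonempty) : (S ∩ frontier K).Nonempty := by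
  by_contra hempty
  have hcover : S ⊆ interior K ∪ (closure K)ᶜ := fun x hxS ↦
    or_iff_not_imp_left.2 fun hxint hxcl ↦ hempty ⟨x, hxS, hxcl, hxint⟩
  obtain ⟨x, -, hxint, hxcl⟩ :=
    hS _ _ isOpen_interior isClosed_closure.isOpen_compl hcover hint hout
  exact hxcl (interior_subset_closure hxint)

lemma exists_unique_frontier_crossing {ι X : Type*} [ConditionallyCompleteLinearOrder ι]
    [TopologicalSpace ι] [OrderTopology ι] [DenselyOrdered ι] [TopologicalSpace X]
    {K : Set X} (hK : IsClosed K) {γ : ι → X} {a b : ι} (hab : a < b)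
    (hγ : ContinuousOn γ (Ioi a)) (hγb : γ b ∈ interior K) (hleave : ∃ t, a < t ∧ γ t ∉ K)
    (hback : ∀ t₀ t₁, a < t₀ → t₀ < t₁ → γ t₁ ∈ K → γ t₀ ∈ interior K) :
    ∃ c, b < c ∧ γ c ∈ frontier K ∧ (∀ t, a < t → t < c → γ t ∈ interior K) ∧
      (∀ t, c < t → γ t ∉ K) ∧ ∀ c', b < c' → γ c' ∈ frontier K → c' = c := by
  obtain ⟨T, haT, hT⟩ := hleave
  have hbT : b ≤ T := by
    by_contra! hTb
    exact hT (interior_subset (hback T b haT hTb (interior_subset hγb)))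
  have hcross : (γ '' Icc b T ∩ frontier K).Nonempty :=
    inter_frontier_nonempty_of_isPreconnected
      (isPreconnected_Icc.image γ (hγ.mono fun _ ht ↦ hab.trans_le ht.1))
      ⟨γ b, mem_image_of_mem γ (left_mem_Icc.2 hbT), hγb⟩
      ⟨γ T, mem_image_of_mem γ (right_mem_Icc.2 hbT), by rwa [hK.closure_eq]⟩
  obtain ⟨_, ⟨c, ⟨hbc, -⟩, rfl⟩, hc⟩ := hcross
  have hbc : b < c := hbc.lt_of_ne fun h ↦ hc.2 (h ▸ hγb)
  have hbefore : ∀ t, a < t → t < c → γ t ∈ interior K := fun t hat htc ↦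
    hback t c hat htc (hK.frontier_subset hc)
  have hafter : ∀ t, c < t → γ t ∉ K := fun t hct ht ↦
    hc.2 (hback c t (hab.trans hbc) hct ht)
  refine ⟨c, hbc, hc, hbefore, hafter, fun c' hbc' hc' ↦ ?_⟩
  rcases lt_trichotomy c' c with hlt | heq | hgt
  · exact absurd (hbefore c' (hab.trans hbc') hlt) hc'.2
  · exact heq
  · exact absurd (hK.frontier_subset hc') (hafter c' hgt)

end FrontierCrossing

section Calculus

open Filter Topology

lemma eventually_notMem_of_comp_eq_smul {X E : Type*} [TopologicalSpace X] [NormedAddCommGroup E]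
    [NormedSpace ℝ E] {K : Set X} (hK : IsCompact K) {F : X → E} (hF : ContinuousOn F K) {b : E}
    (hb : b ≠ 0) {γ : ℝ → X} (hγ : ∀ᶠ t in atTop, F (γ t) = t • b) :
    ∀ᶠ t in atTop, γ t ∉ K := by
  have hnorm : Tendsto (fun t : ℝ ↦ ‖t • b‖) atTop atTop := by
    simpa only [norm_smul] using
      tendsto_norm_atTop_atTop.atTop_mul_const (norm_pos_iff.2 hb)
  obtain ⟨M, hM⟩ := hK.exists_bound_of_continuousOn hF
  filter_upwards [hγ, hnorm.eventually_gt_atTop M] with t ht hMt hmem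
  exact (hM _ hmem).not_gt (ht ▸ hMt)

lemma lt_of_forall_ge_left_exists_hasDerivAt_pos {h : ℝ → ℝ} {a b : ℝ} (hab : a < b)
    (hcont : ContinuousOn h (Icc a b))
    (hderiv : ∀ x ∈ Ico a b, h a ≤ h x → ∃ d, 0 < d ∧ HasDerivAt h d x) : h a < h b := by
  have eq_right_of_isMaxOn {x : ℝ} (hx : x ∈ Icc a b) (hmax : IsMaxOn h (Icc a b) x) : x = b := by
    by_contra hne
    have hxb : x < b := hx.2.lt_of_ne hne
    obtain ⟨d, hd, hdx⟩ := hderiv x ⟨hx.1, hxb⟩ (hmax (left_mem_Icc.2 hab.le))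
    have hcone : b - x ∈ posTangentConeAt (Icc a b) x :=
      sub_mem_posTangentConeAt_of_segment_subset
        (segment_eq_Icc hxb.le ▸ Icc_subset_Icc_left hx.1)
    have hle := hmax.localize.hasFDerivWithinAt_nonpos hdx.hasFDerivAt.hasFDerivWithinAt hcone
    exact hle.not_gt (by simpa using mul_pos (sub_pos.2 hxb) hd)
  obtain ⟨m, hm, hmax⟩ := isCompact_Icc.exists_isMaxOn (nonempty_Icc.2 hab.le) hcont
  obtain rfl := eq_right_of_isMaxOn hm hmax
  refine (hmax (left_mem_Icc.2 hab.le)).lt_of_ne fun heq ↦ hab.ne ?_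
  exact eq_right_of_isMaxOn (left_mem_Icc.2 hab.le) fun x hx ↦ (hmax hx).trans_eq heq.symm

lemma hasDerivAt_of_comp_left {𝕜 𝕜' : Type*} [NontriviallyNormedField 𝕜]
    [NontriviallyNormedField 𝕜'] [NormedAlgebra 𝕜 𝕜'] {f : 𝕜' → 𝕜'} {γ h : 𝕜 → 𝕜'} {f' h' : 𝕜'}
    {t : 𝕜} (hγ : ContinuousAt γ t) (hf : HasDerivAt f f' (γ t)) (hh : HasDerivAt h h' t)
    (hf' : f' ≠ 0) (hcomp : f ∘ γ =ᶠ[𝓝 t] h) : HasDerivAt γ (h' / f') t := by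
  have hinv : Function.LeftInverse
      ((ContinuousLinearMap.toSpanSingleton 𝕜' f'⁻¹).restrictScalars 𝕜)
      ((ContinuousLinearMap.toSpanSingleton 𝕜' f').restrictScalars 𝕜) := fun z ↦ by
    simp [hf']
  simpa [div_eq_mul_inv] using
    (HasFDerivAt.of_comp_of_leftInverse hγ (hf.hasFDerivAt.restrictScalars 𝕜) hh.hasFDerivAt
      hcomp hinv).hasDerivAt

end Calculus

section Convexity

lemma exists_supporting_functional {𝕜 E : Type*} [RCLike 𝕜] [TopologicalSpace E] [AddCommGroup E]
    [Module ℝ E] [Module 𝕜 E] [IsScalarTower ℝ 𝕜 E] [IsTopologicalAddGroup E]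
    [ContinuousSMul 𝕜 E] {K : Set E} (hK : Convex ℝ K) (hint : (interior K).Nonempty) {x : E}
    (hx : x ∉ interior K) :
    ∃ g : StrongDual 𝕜 E, (∀ z ∈ interior K, RCLike.re (g z) < RCLike.re (g x)) ∧
      ∀ z ∈ K, RCLike.re (g z) ≤ RCLike.re (g x) := by
  have : ContinuousSMul ℝ E := IsScalarTower.continuousSMul (M := ℝ) (α := E) 𝕜
  obtain ⟨g, hg⟩ :=
    RCLike.geometric_hahn_banach_open_point (𝕜 := 𝕜) hK.interior isOpen_interior hx
  have hclosed : IsClosed {z | RCLike.re (g z) ≤ RCLike.re (g x)} :=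
    isClosed_le (RCLike.continuous_re.comp g.continuous) continuous_const
  refine ⟨g, hg, fun z hz ↦ closure_minimal (fun y hy ↦ (hg y hy).le) hclosed ?_⟩
  rw [hK.closure_interior_eq_closure_of_nonempty_interior hint]
  exact subset_closure hz

end Convexity

section RayLift

open Filter Topology

variable {f : ℂ[X]} {u z b : ℂ} {γ : ℝ → ℂ} {t : ℝ}

lemma re_inv_nonneg (hz : 0 ≤ z.re) : 0 ≤ z⁻¹.re := by
  rw [inv_re]
  exact div_nonneg hz (normSq_nonneg z)

lemma re_inv_pos (hz : 0 < z.re) : 0 < z⁻¹.re := by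
  rw [inv_re]
  exact div_pos hz (normSq_pos.2 (ne_zero_of_re_pos hz))

lemma re_eval_derivative_div_eval_div_pos (hfz : f.eval z ≠ 0)
    (hle : ∀ w ∈ f.rootSet ℂ, (u * w).re ≤ (u * z).re)
    (hlt : ∃ w ∈ f.rootSet ℂ, (u * w).re < (u * z).re) :
    0 < (f.derivative.eval z / f.eval z / u).re := by
  have hsum : (f.derivative.eval z / f.eval z / u).re =
      (f.roots.map fun w ↦ (u * z - u * w)⁻¹.re).sum := by
    rw [(IsAlgClosed.splits f).eval_derivative_div_eval_of_ne_zero hfz, div_eq_mul_inv,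
      ← Multiset.sum_map_mul_right, ← coe_reAddGroupHom, map_multiset_sum, Multiset.map_map]
    simp [← mul_sub, mul_comm]
  have mem_roots_iff {w : ℂ} : w ∈ f.roots ↔ w ∈ f.rootSet ℂ := by
    simp [mem_rootSet]
  obtain ⟨v, hv, hvz⟩ := hlt
  rw [hsum]
  calc (0 : ℝ) = (f.roots.map fun _ ↦ 0).sum := by simp
    _ < (f.roots.map fun w ↦ (u * z - u * w)⁻¹.re).sum := Multiset.sum_lt_sum
      (fun w hw ↦ re_inv_nonneg <| by
        simpa only [sub_re, sub_nonneg] using hle w (mem_roots_iff.1 hw))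
      ⟨v, mem_roots_iff.2 hv, re_inv_pos <| by simpa only [sub_re, sub_pos] using hvz⟩

lemma exists_pos_hasDerivAt_re_mul (hb : b ≠ 0) (ht : 0 < t) (hγ : ContinuousAt γ t)
    (hγf : ∀ᶠ s in 𝓝 t, f.eval (γ s) = s • b)
    (hle : ∀ w ∈ f.rootSet ℂ, (u * w).re ≤ (u * γ t).re)
    (hlt : ∃ w ∈ f.rootSet ℂ, (u * w).re < (u * γ t).re) :
    ∃ d, 0 < d ∧ HasDerivAt (fun s ↦ (u * γ s).re) d t := by
  have hγt : f.eval (γ t) = t • b := hγf.self_of_nhds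
  have hfγ : f.eval (γ t) ≠ 0 := hγt ▸ smul_ne_zero ht.ne' hb
  have hpos := re_eval_derivative_div_eval_div_pos hfγ hle hlt
  have hf' : f.derivative.eval (γ t) ≠ 0 := by
    intro h
    simp [h] at hpos
  have hvel : HasDerivAt γ (b / f.derivative.eval (γ t)) t :=
    hasDerivAt_of_comp_left hγ (f.hasDerivAt _)
      (by simpa using (hasDerivAt_id t).smul_const b) hf' hγf
  have hspeed : u * (b / f.derivative.eval (γ t)) =
      t⁻¹ • (f.derivative.eval (γ t) / f.eval (γ t) / u)⁻¹ := by
    have htC : (t : ℂ) ≠ 0 := ofReal_ne_zero.2 ht.ne'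
    rw [hγt, real_smul, real_smul, ofReal_inv]
    field_simp
  refine ⟨(u * (b / f.derivative.eval (γ t))).re, ?_,
    reCLM.hasFDerivAt.comp_hasDerivAt t (hvel.const_mul u)⟩
  rw [hspeed, smul_re]
  exact smul_pos (inv_pos.2 ht) (re_inv_pos hpos)

lemma mem_interior_of_eval_eq_smul_of_lt {K : Set ℂ} (hK : Convex ℝ K) (hroots : f.rootSet ℂ ⊆ K)
    (hhull : (convexHull ℝ (f.rootSet ℂ) ∩ interior K).Nonempty) (hb : b ≠ 0)
    (hγ : ContinuousOn γ (Ioi 0)) (hγf : ∀ t : ℝ, 0 < t → f.eval (γ t) = t • b) {t₀ t₁ : ℝ}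
    (ht₀ : 0 < t₀) (hlt : t₀ < t₁) (ht₁ : γ t₁ ∈ K) : γ t₀ ∈ interior K := by
  by_contra hout
  obtain ⟨p, hp, hpint⟩ := hhull
  obtain ⟨g, hgint, hgK⟩ := exists_supporting_functional (𝕜 := ℂ) hK ⟨p, hpint⟩ hout
  obtain ⟨u, hu⟩ : ∃ u, ∀ z, g z = u * z :=
    ⟨g 1, fun z ↦ by simpa [mul_comm] using g.map_smul z 1⟩
  simp only [hu, RCLike.re_to_complex] at hgint hgK
  obtain ⟨v, hv, hvp : (u * v).re ≤ (u * p).re⟩ := ((reLm ∘ₗ LinearMap.mulLeft ℝ u).concaveOn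
    (convex_convexHull ℝ _)).exists_le_of_mem_convexHull (subset_convexHull ℝ _) hp
  have hvlt : (u * v).re < (u * γ t₀).re := hvp.trans_lt (hgint p hpint)
  refine (hgK _ ht₁).not_gt (lt_of_forall_ge_left_exists_hasDerivAt_pos
    (h := fun t ↦ (u * γ t).re) hlt ?_ fun t ht hle ↦ ?_)
  · exact continuous_re.comp_continuousOn
      (continuousOn_const.mul (hγ.mono fun t ht ↦ ht₀.trans_le ht.1))
  · have htpos : 0 < t := ht₀.trans_le ht.1
    exact exists_pos_hasDerivAt_re_mul hb htpos (hγ.continuousAt (Ioi_mem_nhds htpos))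
      ((eventually_gt_nhds htpos).mono hγf)
      (fun w hw ↦ (hgK w (hroots hw)).trans hle) ⟨v, hv, hvlt.trans_le hle⟩

end RayLift

lemma rootSet_prod_X_sub_C_pow {R ι : Type*} [CommRing R] [IsDomain R] [Fintype ι] (α : ι → R)
    {n : ι → ℕ} (hn : ∀ j, n j ≠ 0) :
    (∏ j, (X - C (α j)) ^ n j).rootSet R = range α := by
  ext z
  have hne : ∏ j, (X - C (α j)) ^ n j ≠ 0 :=
    (monic_prod_of_monic _ _ fun j _ ↦ (monic_X_sub_C (α j)).pow (n j)).ne_zero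
  simp [mem_rootSet, hne, Finset.prod_eq_zero_iff, hn, sub_eq_zero, eq_comm (a := z)]

theorem unique_exit_time_general {f : ℂ[X]} {K : Set ℂ} (hKc : IsCompact K) (hK : Convex ℝ K)
    (hroots : f.rootSet ℂ ⊆ K) (hhull : (convexHull ℝ (f.rootSet ℂ) ∩ interior K).Nonempty)
    {β : ℂ} (hβ : β ∈ interior K) (hfβ : f.eval β ≠ 0) {γ : ℝ → ℂ}
    (hγ : ContinuousOn γ (Ioi 0)) (hγ1 : γ 1 = β)
    (hγf : ∀ t : ℝ, 0 < t → f.eval (γ t) = t • f.eval β) :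
    ∃ c : ℝ, 1 < c ∧ γ c ∈ frontier K ∧
      (∀ t : ℝ, 0 < t → t < c → γ t ∈ interior K) ∧
      (∀ t : ℝ, c < t → γ t ∉ K) ∧
      ∀ c' : ℝ, 1 < c' → γ c' ∈ frontier K → c' = c := by
  have hleave : ∀ᶠ t in Filter.atTop, γ t ∉ K :=
    eventually_notMem_of_comp_eq_smul hKc f.continuousOn hfβ
      ((Filter.eventually_gt_atTop 0).mono hγf)
  exact exists_unique_frontier_crossing hKc.isClosed zero_lt_one hγ (hγ1 ▸ hβ)
    ((Filter.eventually_gt_atTop 0).and hleave).exists fun _ _ ht₀ hlt ht₁ ↦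
      mem_interior_of_eval_eq_smul_of_lt hK hroots hhull hfβ hγ hγf ht₀ hlt ht₁

/-- If the convex hull `K` of the roots of `f` has nonempty
interior and `β` is an interior point of `K` with `f β ≠ 0`, then any
continuous lift `γ` on `[0, ∞)` of the line `t ↦ t • f β` with `γ 1 = β`
crosses the boundary of `K` at a unique time `c > 1`; before time `c` it stays
in the interior of `K` and after time `c` it stays outside `K`. -/
theorem unique_exit_time
    (s : ℕ) (hs : 2 ≤ s)
    (α : Fin s → ℂ) (hα : Function.Injective α)
    (n : Fin s → ℕ) (hn : ∀ j, 1 ≤ n j)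
    (f : Polynomial ℂ) (hf : f = ∏ j, (X - C (α j)) ^ n j)
    (K : Set ℂ) (hK : K = convexHull ℝ (Set.range α))
    (hKint : (interior K).Nonempty)
    (β : ℂ) (hβ : β ∈ interior K) (hfβ : f.eval β ≠ 0)
    (γ : ℝ → ℂ) (hγcont : ContinuousOn γ (Set.Ici 0))
    (hγ1 : γ 1 = β)
    (hγf : ∀ t : ℝ, 0 ≤ t → f.eval (γ t) = (t : ℂ) * f.eval β) :
    ∃ c : ℝ, 1 < c ∧ γ c ∈ frontier K ∧
      (∀ t : ℝ, 0 < t → t < c → γ t ∈ interior K) ∧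
      (∀ t : ℝ, c < t → γ t ∉ K) ∧
      ∀ c' : ℝ, 1 < c' → γ c' ∈ frontier K → c' = c := by
  rw [← rootSet_prod_X_sub_C_pow α fun j ↦ Nat.one_le_iff_ne_zero.1 (hn j), ← hf] at hK
  subst hK
  exact unique_exit_time_general ((f.rootSet_finite ℂ).isCompact_convexHull ℝ)
    (convex_convexHull ℝ _) (subset_convexHull ℝ _) ⟨β, interior_subset hβ, hβ⟩ hβ hfβ
    (hγcont.mono Ioi_subset_Ici_self) hγ1 fun t ht ↦ by simpa using hγf t ht.le
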